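/- Let H be a complex separable Hilbert space, let B be a (possibly unbounded) densely defined closed linear operator in H, and let A be a bounded operator on H such that both A and the product AB (with its natural domain D(AB) = D(B)) are normal. If BA is normal, then A*AB ⊂ BA*A, i.e., BA*A extends A*AB. -/

import Mathlib

noncomputable section

variable {H : Type*} [NormedAddCommGroup H] [InnerProductSpace ℂ H] [CompleteSpace H]

namespace LinearPMap

/-- The composition `S ∘ T` of two partially defined linear operators, with its natural
domain `{x ∈ D(T) : T x ∈ D(S)}`. -/
noncomputable def pcomp (S T : H →ₗ.[ℂ] H) : H →ₗ.[ℂ] H :=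
  { domain := (S.domain.comap T.toFun).map T.domain.subtype
    toFun := (S.toFun.comp ((T.toFun.comp (S.domain.comap T.toFun).subtype).codRestrict
        S.domain fun x => x.2)).comp
      (Submodule.equivMapOfInjective T.domain.subtype Subtype.val_injective
        (S.domain.comap T.toFun)).symm.toLinearMap }

/-- A bounded operator viewed as a partially defined operator with domain the
whole space. -/
noncomputable def ofCLM (A : H →L[ℂ] H) : H →ₗ.[ℂ] H :=
  A.toLinearMap.toPMap ⊤

/-- An unbounded densely defined operator is *normal* if it is closed and
`N N* = N* N` (including equality of the natural domains). -/
def IsNormalPMap (N : H →ₗ.[ℂ] H) : Prop :=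
  Dense (N.domain : Set H) ∧ N.IsClosed ∧ N.pcomp N.adjoint = N.adjoint.pcomp N

end LinearPMap

open LinearPMap ContinuousLinearMap

/-- A bounded operator `T` is *normal* if `T T* = T* T`. -/
def IsNormalOp (T : H →L[ℂ] H) : Prop :=
  T * ContinuousLinearMap.adjoint T = ContinuousLinearMap.adjoint T * T



open Filter Topology in
theorem ku_cutoff (R : H →L[ℂ] H) (hR : IsSelfAdjoint R) :
    ∃ F h : ℕ → (H →L[ℂ] H), Tendsto F atTop (𝓝 R) ∧
      ∀ n, F n * h n * R = F n ∧ IsSelfAdjoint (h n) ∧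
        ∀ T, Commute R T → Commute (F n) T ∧ Commute (h n) T := by
  let e : ℕ → ℝ := fun n => 1 / ((n : ℝ) + 1)
  have he : ∀ n, 0 < e n := fun n => by positivity
  let c : ℕ → ℝ → ℝ := fun n r => max (-(e n)) (min r (e n))
  let f : ℕ → ℝ → ℝ := fun n r => r - c n r
  let g : ℕ → ℝ → ℝ := fun n r => r / max (r ^ 2) ((e n) ^ 2)
  have hc : ∀ n, Continuous (c n) := fun n => by fun_prop
  have hf : ∀ n, Continuous (f n) := fun n => by fun_prop
  have hg : ∀ n, Continuous (g n) := fun n => by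
    refine Continuous.div (by fun_prop) (by fun_prop) fun x => ?_
    have := he n
    have : 0 < max (x ^ 2) (e n ^ 2) := lt_max_of_lt_right (by positivity)
    exact this.ne'
  have hfg : ∀ n r, f n r * g n r * r = f n r := by
    intro n r
    have h0 := he n
    by_cases h : |r| ≤ e n
    · have h1 := abs_le.1 h
      have : f n r = 0 := by
        simp only [f, c]
        rw [min_eq_left h1.2, max_eq_right h1.1, sub_self]
      simp [this]
    · push Not at h
      have h2 : e n ^ 2 ≤ r ^ 2 := by
        rw [← sq_abs r]; gcongr
      have h3 : r ≠ 0 := by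
        intro h4; simp [h4] at h; linarith
      simp only [g]
      rw [max_eq_left h2]
      field_simp
  refine ⟨fun n => cfc (f n) R, fun n => cfc (g n) R, ?_, fun n => ⟨?_, ?_, fun T hT => ⟨?_, ?_⟩⟩⟩
  · rw [tendsto_iff_norm_sub_tendsto_zero]
    refine squeeze_zero (fun n => norm_nonneg _) (g := e) (fun n => ?_)
      tendsto_one_div_add_atTop_nhds_zero_nat
    have : cfc (f n) R = R - cfc (c n) R := by
      simp only [f]
      rw [cfc_sub (fun r => r) (c n) R (by fun_prop) ((hc n).continuousOn), cfc_id' ℝ R]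
    rw [this, sub_sub_cancel_left, norm_neg]
    refine norm_cfc_le (he n).le fun x _ => ?_
    rw [Real.norm_eq_abs, abs_le]
    have := he n
    exact ⟨le_max_left _ _, max_le (by linarith) (min_le_right _ _)⟩
  · have h1 : cfc (fun r => f n r * g n r * r) R = cfc (f n) R := by
      congr 1; ext r; exact hfg n r
    rw [cfc_mul (fun r => f n r * g n r) (fun r => r) R (((hf n).mul (hg n)).continuousOn)
      (by fun_prop), cfc_mul (f n) (g n) R (hf n).continuousOn (hg n).continuousOn,
      cfc_id' ℝ R] at h1
    exact h1
  · exact cfc_predicate _ _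
  · exact hT.cfc_real _
  · exact hT.cfc_real _

open Filter Topology in
theorem ku_bdd (R C S D X : H →L[ℂ] H) (hR : IsSelfAdjoint R) (hS : IsSelfAdjoint S)
    (hRi : ∀ v, R v = 0 → v = 0) (hSi : ∀ v, S v = 0 → v = 0)
    (hC : IsStarNormal C) (hD : IsStarNormal D) (hRC : Commute R C) (hSD : Commute S D)
    (h : S * X * C = D * X * R) : S * X * star C = star D * X * R := by
  obtain ⟨F, p, hF, hFp⟩ := ku_cutoff R hR
  obtain ⟨G, q, hG, hGq⟩ := ku_cutoff S hS
  have hRC' : Commute R (star C) := by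
    have := hRC.star_star; rwa [hR.star_eq] at this
  have hSD' : Commute S (star D) := by
    have := hSD.star_star; rwa [hS.star_eq] at this
  have key : ∀ n, S * G n * X * star C * F n = G n * star D * X * R * F n := by
    intro n
    obtain ⟨f1, f2, f3⟩ := hFp n
    obtain ⟨g1, g2, g3⟩ := hGq n
    have FR := (f3 R (Commute.refl R)).1
    have pR := (f3 R (Commute.refl R)).2
    have FC := (f3 C hRC).1
    have pC := (f3 C hRC).2
    have FC' := (f3 _ hRC').1
    have pC' := (f3 _ hRC').2
    have Fp := (f3 _ pR.symm).1
    have GS := (g3 S (Commute.refl S)).1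
    have qS := (g3 S (Commute.refl S)).2
    have GD := (g3 D hSD).1
    have qD := (g3 D hSD).2
    have GD' := (g3 _ hSD').1
    have qD' := (g3 _ hSD').2
    have Gq := (g3 _ qS.symm).1
    generalize F n = F at *
    generalize G n = G at *
    generalize p n = p at *
    generalize q n = q at *
    have n1 : IsStarNormal (C * p) := by
      constructor
      rw [star_mul, f2.star_eq]
      have hc : Commute (star C) C := hC.star_comm_self
      exact ((pC.mul_right (Commute.refl p)).mul_left (hc.mul_right pC'.symm))
    have n2 : IsStarNormal (D * q) := by
      constructor
      rw [star_mul, g2.star_eq]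
      have hc : Commute (star D) D := hD.star_comm_self
      exact ((qD.mul_right (Commute.refl q)).mul_left (hc.mul_right qD'.symm))
    have s : SemiconjBy (G * X * F) (C * p) (D * q) := by
      change G * X * F * (C * p) = D * q * (G * X * F)
      calc G * X * F * (C * p) = (G * q * S) * X * (F * C) * p := by rw [g1]; noncomm_ring
        _ = G * q * (S * X * C) * F * p := by rw [FC.eq]; noncomm_ring
        _ = G * q * D * X * (R * (F * p)) := by rw [h]; noncomm_ring
        _ = G * q * D * X * (F * p * R) := by rw [(FR.mul_left pR).eq]
        _ = (G * q * D) * X * F := by rw [f1]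
        _ = D * (G * q) * X * F := by rw [(GD.mul_left qD).eq]
        _ = D * q * (G * X * F) := by rw [Gq.eq]; noncomm_ring
    have t := (s.star_right n1 n2).eq
    rw [star_mul, star_mul, f2.star_eq, g2.star_eq] at t
    calc S * G * X * star C * F = S * G * X * star C * (F * p * R) := by rw [f1]
      _ = S * G * X * (star C * (F * p)) * R := by noncomm_ring
      _ = S * (G * X * F * (p * star C)) * R := by
        rw [← (FC'.mul_left pC').eq]; noncomm_ring
      _ = S * q * (star D * G) * X * F * R := by rw [t]; noncomm_ring
      _ = (S * (q * G)) * star D * X * (F * R) := by rw [← GD'.eq]; noncomm_ring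
      _ = G * star D * X * R * F := by
        rw [← Gq.eq, ← (GS.mul_left qS).eq, g1, FR.eq]; noncomm_ring
  have l1 : Tendsto (fun n => S * G n * X * star C * F n) atTop (𝓝 (S * S * X * star C * R)) :=
    ((((tendsto_const_nhds.mul hG).mul tendsto_const_nhds).mul tendsto_const_nhds).mul hF)
  have l2 : Tendsto (fun n => G n * star D * X * R * F n) atTop (𝓝 (S * star D * X * R * R)) :=
    ((((hG.mul tendsto_const_nhds).mul tendsto_const_nhds).mul tendsto_const_nhds).mul hF)
  have l3 := tendsto_nhds_unique (l1.congr key) l2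
  have l4 : S * X * star C * R = star D * X * R * R := by
    ext v
    have := DFunLike.congr_fun l3 v
    rw [← sub_eq_zero] at this ⊢
    apply hSi
    simpa using this
  have l5 : R * star (S * X * star C) = R * star (star D * X * R) := by
    have := congrArg star l4
    rwa [star_mul, star_mul _ R, hR.star_eq] at this
  apply star_injective
  ext v
  have := DFunLike.congr_fun l5 v
  rw [← sub_eq_zero] at this ⊢
  apply hRi
  simpa using this


theorem ku_gadj (N : H →ₗ.[ℂ] H) (hN : Dense (N.domain : Set H)) (x y : H) :
    (x, y) ∈ N.adjoint.graph ↔ ∀ a b, (a, b) ∈ N.graph → inner ℂ b x = inner ℂ a y := by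
  rw [LinearPMap.adjoint_graph_eq_graph_adjoint hN, Submodule.mem_adjoint_iff]
  simp only [sub_eq_zero]

theorem ku_gcomp (S T : H →ₗ.[ℂ] H) (x z : H) :
    (x, z) ∈ (S.pcomp T).graph ↔ ∃ y, (x, y) ∈ T.graph ∧ (y, z) ∈ S.graph := by
  have key : ∀ (u : T.domain) (hu : T u ∈ S.domain) (hu' : (u : H) ∈ (S.pcomp T).domain),
      (S.pcomp T) ⟨u, hu'⟩ = S ⟨T u, hu⟩ := by
    intro u hu hu'
    have h1 : (Submodule.equivMapOfInjective T.domain.subtype Subtype.val_injective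
        (S.domain.comap T.toFun)).symm ⟨u, hu'⟩ = ⟨u, hu⟩ := by
      rw [LinearEquiv.symm_apply_eq]
      rfl
    change S.toFun _ = S.toFun _
    congr 1
    apply Subtype.ext
    change T.toFun (((Submodule.equivMapOfInjective T.domain.subtype Subtype.val_injective
        (S.domain.comap T.toFun)).symm ⟨u, hu'⟩ : _) : T.domain) = T.toFun u
    rw [h1]
  constructor
  · intro h
    obtain ⟨⟨w, hw⟩, h1, h2⟩ := (mem_graph_iff _).1 h
    have hw0 := hw
    obtain ⟨u, hu, rfl⟩ := hw0
    have hu : T u ∈ S.domain := hu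
    have := key u hu hw
    refine ⟨T u, (mem_graph_iff _).2 ⟨u, h1, rfl⟩, (mem_graph_iff _).2 ⟨⟨T u, hu⟩, rfl, ?_⟩⟩
    rw [← this]; exact h2
  · rintro ⟨y, h1, h2⟩
    obtain ⟨u, hu1, hu2⟩ := (mem_graph_iff _).1 h1
    obtain ⟨v, hv1, hv2⟩ := (mem_graph_iff _).1 h2
    dsimp only at hu1 hu2 hv1 hv2
    have hu : T u ∈ S.domain := by rw [hu2, ← hv1]; exact v.2
    have hu' : (u : H) ∈ (S.pcomp T).domain := ⟨u, hu, rfl⟩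
    refine (mem_graph_iff _).2 ⟨⟨u, hu'⟩, hu1, ?_⟩
    rw [key u hu hu']
    dsimp only
    rw [← hv2]
    congr 1
    apply Subtype.ext
    rw [hv1]; exact hu2

theorem ku_gclm (A : H →L[ℂ] H) (x y : H) : (x, y) ∈ (ofCLM A).graph ↔ y = A x := by
  rw [mem_graph_iff]
  constructor
  · rintro ⟨u, h1, h2⟩
    dsimp only at h1 h2
    rw [← h2, ← h1]; rfl
  · rintro rfl
    exact ⟨⟨x, Submodule.mem_top⟩, rfl, rfl⟩

theorem ku_proj (N : H →ₗ.[ℂ] H) (hN : N.IsClosed) :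
    ∃ P Q : (H × H) →L[ℂ] H, (∀ v, (P v, Q v) ∈ N.graph) ∧
      ∀ v a b, (a, b) ∈ N.graph → inner ℂ a (v.1 - P v) + inner ℂ b (v.2 - Q v) = 0 := by
  let e := WithLp.prodContinuousLinearEquiv 2 ℂ H H
  let K : Submodule ℂ (WithLp 2 (H × H)) := N.graph.comap e.toLinearMap
  have hK : IsClosed (K : Set (WithLp 2 (H × H))) := hN.preimage e.continuous
  have : CompleteSpace K := hK.completeSpace_coe
  let W : (H × H) →L[ℂ] (H × H) :=
    e.toContinuousLinearMap ∘L K.starProjection ∘L e.symm.toContinuousLinearMap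
  refine ⟨ContinuousLinearMap.fst ℂ H H ∘L W, ContinuousLinearMap.snd ℂ H H ∘L W, ?_, ?_⟩
  · intro v
    exact K.starProjection_apply_mem (e.symm v)
  · intro v a b hab
    have := K.sub_starProjection_mem_orthogonal (e.symm v)
    rw [Submodule.mem_orthogonal] at this
    exact this (e.symm (a, b)) hab

theorem ku_uniq (N : H →ₗ.[ℂ] H) (hN : Dense (N.domain : Set H)) (x y z : H)
    (h1 : (x, y) ∈ N.graph) (h2 : (y, z) ∈ N.adjoint.graph) (h : x + z = 0) : x = 0 := by
  have h3 := (ku_gadj N hN y z).1 h2 x y h1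
  have hz : z = -x := by rw [eq_neg_iff_add_eq_zero, add_comm]; exact h
  rw [hz, inner_neg_right, inner_self_eq_norm_sq_to_K, inner_self_eq_norm_sq_to_K] at h3
  have h4 : ‖y‖ ^ 2 = -‖x‖ ^ 2 := by exact_mod_cast h3
  have h5 : ‖x‖ ^ 2 = 0 := by nlinarith [sq_nonneg ‖x‖, sq_nonneg ‖y‖]
  simpa using h5

theorem ku_guniq (N : H →ₗ.[ℂ] H) {x y z : H} (h1 : (x, y) ∈ N.graph) (h2 : (x, z) ∈ N.graph) :
    y = z := N.mem_graph_snd_inj h1 h2 rfl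

theorem ku_resolvent (N : H →ₗ.[ℂ] H) (hN : IsNormalPMap N) :
    ∃ R C : H →L[ℂ] H, IsSelfAdjoint R ∧ (∀ v, R v = 0 → v = 0) ∧ IsStarNormal C ∧
      Commute R C ∧ star C * C = R - R * R ∧ (∀ v, (R v, C v) ∈ N.graph) ∧
      (∀ v, (C v, v - R v) ∈ N.adjoint.graph) ∧ (∀ v, (R v, star C v) ∈ N.adjoint.graph) ∧
      (∀ v, (star C v, v - R v) ∈ N.graph) ∧ (∀ x y, (x, y) ∈ N.graph → R y = C x) ∧
      (∀ x y, (x, y) ∈ N.adjoint.graph → R y = star C x) := by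
  obtain ⟨hd, hc, hn⟩ := hN
  obtain ⟨P, Q, hPQ, hort⟩ := ku_proj N hc
  let R : H →L[ℂ] H := P ∘L ContinuousLinearMap.inl ℂ H H
  let C : H →L[ℂ] H := Q ∘L ContinuousLinearMap.inl ℂ H H
  have g1 : ∀ v, (R v, C v) ∈ N.graph := fun v => hPQ (v, 0)
  have g2 : ∀ v, (C v, v - R v) ∈ N.adjoint.graph := by
    intro v
    rw [ku_gadj N hd]
    intro a b hab
    have h : inner ℂ a (v - R v) + inner ℂ b (0 - C v) = 0 := hort (v, 0) a b hab
    rw [zero_sub, inner_neg_right, ← sub_eq_add_neg, sub_eq_zero] at h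
    exact h.symm
  have un : ∀ u y z v, (u, y) ∈ N.graph → (y, z) ∈ N.adjoint.graph → u + z = v → u = R v := by
    intro u y z v h1 h2 h3
    have h4 := N.graph.sub_mem h1 (g1 v)
    have h5 := N.adjoint.graph.sub_mem h2 (g2 v)
    rw [Prod.mk_sub_mk] at h4 h5
    rw [← sub_eq_zero]
    refine ku_uniq N hd _ _ _ h4 h5 ?_
    rw [← h3]; abel
  have sw : ∀ x z, (∃ y, (x, y) ∈ N.graph ∧ (y, z) ∈ N.adjoint.graph) ↔
      (∃ y, (x, y) ∈ N.adjoint.graph ∧ (y, z) ∈ N.graph) := by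
    intro x z
    rw [← ku_gcomp, ← ku_gcomp, hn]
  have un' : ∀ u y z v, (u, y) ∈ N.adjoint.graph → (y, z) ∈ N.graph → u + z = v → u = R v := by
    intro u y z v h1 h2 h3
    obtain ⟨y', h4, h5⟩ := (sw u z).2 ⟨y, h1, h2⟩
    exact un _ _ _ _ h4 h5 h3
  have inj : ∀ v, R v = 0 → v = 0 := by
    intro v hv
    have h1 := g1 v
    rw [hv] at h1
    have h2 : C v = 0 := ku_guniq N h1 N.graph.zero_mem
    have h3 := g2 v
    rw [h2, hv, sub_zero] at h3
    exact ku_guniq _ h3 N.adjoint.graph.zero_mem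
  have sa0 : ∀ v w, inner ℂ (R v) w = inner ℂ (R v) (R w) + inner ℂ (C v) (C w) := by
    intro v w
    rw [(ku_gadj N hd _ _).1 (g2 w) _ _ (g1 v), inner_sub_right]; ring
  have sa : IsSelfAdjoint R := by
    rw [ContinuousLinearMap.isSelfAdjoint_iff_isSymmetric]
    intro v w
    change inner ℂ (R v) w = inner ℂ v (R w)
    rw [sa0 v w, ← inner_conj_symm v (R w), sa0 w v, _root_.map_add, inner_conj_symm, inner_conj_symm]
  have sa' : ∀ v w, inner ℂ (R v) w = inner ℂ v (R w) := fun v w =>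
    (ContinuousLinearMap.isSelfAdjoint_iff_isSymmetric.1 sa) v w
  have r1 : ∀ x y, (x, y) ∈ N.graph → R y = C x := by
    intro x y hxy
    have h1 := N.graph.sub_mem hxy (g1 x)
    rw [Prod.mk_sub_mk] at h1
    exact (un' _ _ _ y (g2 x) h1 (by abel)).symm
  have st : ∀ v w, inner ℂ (star C v) w = inner ℂ v (C w) := fun v w => by
    rw [ContinuousLinearMap.star_eq_adjoint, ContinuousLinearMap.adjoint_inner_left]
  have g34 : ∀ v, (R v, star C v) ∈ N.adjoint.graph ∧ (star C v, v - R v) ∈ N.graph := by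
    intro v
    obtain ⟨y, h1, h2⟩ := (sw (R v) (v - R v)).1 ⟨C v, g1 v, g2 v⟩
    have : y = star C v := by
      refine hd.eq_of_inner_left ℂ fun a ha => ?_
      have hab : (a, N ⟨a, ha⟩) ∈ N.graph := N.mem_graph ⟨a, ha⟩
      have h3 := (ku_gadj N hd _ _).1 h1 _ _ hab
      rw [st, ← r1 _ _ hab, ← sa', ← inner_conj_symm y a, ← h3, inner_conj_symm]
    rw [← this]
    exact ⟨h1, h2⟩
  have r2 : ∀ x y, (x, y) ∈ N.adjoint.graph → R y = star C x := by
    intro x y hxy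
    have h1 := N.adjoint.graph.sub_mem hxy (g34 x).1
    rw [Prod.mk_sub_mk] at h1
    exact (un _ _ _ y (g34 x).2 h1 (by abel)).symm
  have cm : Commute R C := by
    ext v
    exact r1 _ _ (g1 v)
  have c1 : star C * C = R - R * R := by
    ext v
    have h1 := r2 _ _ (g2 v)
    change star C (C v) = R v - R (R v)
    rw [← h1, _root_.map_sub]
  have c2 : C * star C = R - R * R := by
    ext v
    have h1 := r1 _ _ (g34 v).2
    change C (star C v) = R v - R (R v)
    rw [← h1, _root_.map_sub]
  exact ⟨R, C, sa, inj, ⟨c1.trans c2.symm⟩, cm, c1, g1, g2, fun v => (g34 v).1,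
    fun v => (g34 v).2, r1, r2⟩

/-- Fuglede-Putnam for unbounded normal operators. -/
theorem ku_fuglede (N M : H →ₗ.[ℂ] H) (hN : IsNormalPMap N) (hM : IsNormalPMap M)
    (X : H →L[ℂ] H) (hX : ∀ x y, (x, y) ∈ N.graph → (X x, X y) ∈ M.graph) (x y : H)
    (hxy : (x, y) ∈ N.adjoint.graph) : (X x, X y) ∈ M.adjoint.graph := by
  obtain ⟨R, C, hR, hRi, hC, hRC, hCC, n1, n2, n3, n4, n5, n6⟩ := ku_resolvent N hN
  obtain ⟨S, D, hS, hSi, hD, hSD, hDD, m1, m2, m3, m4, m5, m6⟩ := ku_resolvent M hM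
  have h0 : S * X * C = D * X * R := by
    ext v
    exact m5 _ _ (hX _ _ (n1 v))
  have h1 := ku_bdd R C S D X hR hS hRi hSi hC hD hRC hSD h0
  have h2 : S * X * (1 - R) * R = star D * X * C * R := by
    calc S * X * (1 - R) * R = S * X * (R - R * R) := by noncomm_ring
      _ = (S * X * star C) * C := by rw [← hCC]; noncomm_ring
      _ = star D * X * (R * C) := by rw [h1]; noncomm_ring
      _ = star D * X * C * R := by rw [hRC.eq]; noncomm_ring
  have h3 : S * X * (1 - R) = star D * X * C := by
    have l5 : R * star (S * X * (1 - R)) = R * star (star D * X * C) := by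
      have := congrArg star h2
      rwa [star_mul _ R, star_mul _ R, hR.star_eq] at this
    apply star_injective
    ext v
    have := DFunLike.congr_fun l5 v
    rw [← sub_eq_zero] at this ⊢
    apply hRi
    simpa using this
  have e1 : C y = x - R x := by
    have h4 := n1 y
    rw [n6 _ _ hxy] at h4
    exact ku_guniq N h4 (n4 x)
  have key : S (X y) = star D (X x) := by
    have a1 : S (X (star C x)) = star D (X (R x)) := DFunLike.congr_fun h1 x
    have a2 : S (X (y - R y)) = star D (X (C y)) := DFunLike.congr_fun h3 y
    rw [e1, n6 _ _ hxy] at a2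
    simp only [_root_.map_sub] at a2
    rw [a1] at a2
    simpa using a2
  have f1 := m4 (X x)
  rw [← key] at f1
  have f2 : D (X y) = X x - S (X x) := ku_guniq M (m1 _) f1
  have f3 := M.adjoint.graph.add_mem (m3 (X x)) (m2 (X y))
  rw [f2, ← key, Prod.mk_add_mk] at f3
  simpa using f3

/-- If `B` is densely defined and closed, `A` is bounded, and both `A` and `AB`
are normal, then normality of `BA` implies `A* A B ⊂ B A* A`. -/
theorem kaplansky_unbounded_forward [TopologicalSpace.SeparableSpace H] (B : H →ₗ.[ℂ] H) (A : H →L[ℂ] H)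
    (hBdense : Dense (B.domain : Set H)) (hBclosed : B.IsClosed)
    (hA : IsNormalOp A) (hAB : IsNormalPMap ((ofCLM A).pcomp B))
    (hBA : IsNormalPMap (B.pcomp (ofCLM A))) :
    (ofCLM (ContinuousLinearMap.adjoint A * A)).pcomp B ≤
      B.pcomp (ofCLM (ContinuousLinearMap.adjoint A * A)) := by
  have hle : ∀ S T : H →ₗ.[ℂ] H, (∀ x y, (x, y) ∈ S.graph → (x, y) ∈ T.graph) → S ≤ T := by
    intro S T h
    exact LinearPMap.le_of_le_graph fun p hp => h p.1 p.2 hp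
  apply hle
  intro x z hxz
  obtain ⟨y, hxy, hyz⟩ := (ku_gcomp _ _ _ _).1 hxz
  rw [ku_gclm] at hyz
  subst hyz
  rw [ku_gcomp]
  refine ⟨_, (ku_gclm _ _ _).2 rfl, ?_⟩
  set A' := ContinuousLinearMap.adjoint A with hA'
  have key : ∀ d c, (d, c) ∈ B.adjoint.graph →
      inner ℂ ((A' * A) y) d = inner ℂ ((A' * A) x) c := by
    intro d c hdc
    have h1 : (d, A' c) ∈ (B.pcomp (ofCLM A)).adjoint.graph := by
      rw [ku_gadj _ hBA.1]
      intro a b hab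
      obtain ⟨a', h2, h3⟩ := (ku_gcomp _ _ _ _).1 hab
      rw [ku_gclm] at h2
      subst h2
      rw [(ku_gadj _ hBdense _ _).1 hdc _ _ h3, hA', ContinuousLinearMap.adjoint_inner_right]
    have h2 := ku_fuglede _ _ hBA hAB A (by
      intro a b hab
      obtain ⟨a', h2, h3⟩ := (ku_gcomp _ _ _ _).1 hab
      rw [ku_gclm] at h2
      subst h2
      rw [ku_gcomp]
      exact ⟨b, h3, (ku_gclm _ _ _).2 rfl⟩) _ _ h1
    have h3 : (x, A y) ∈ ((ofCLM A).pcomp B).graph := by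
      rw [ku_gcomp]
      exact ⟨y, hxy, (ku_gclm _ _ _).2 rfl⟩
    have h4 := (ku_gadj _ hAB.1 _ _).1 h2 _ _ h3
    have h5 : A' * A = A * A' := hA.symm
    calc inner ℂ ((A' * A) y) d = inner ℂ (A y) (A d) := by
          change inner ℂ (A' (A y)) d = _
          rw [hA', ContinuousLinearMap.adjoint_inner_left]
      _ = inner ℂ x (A (A' c)) := h4
      _ = inner ℂ (A' x) (A' c) := by
          rw [hA', ContinuousLinearMap.adjoint_inner_left]
      _ = inner ℂ ((A' * A) x) c := by
          rw [h5]
          change _ = inner ℂ (A (A' x)) c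
          rw [hA', ContinuousLinearMap.adjoint_inner_right]
  generalize (A' * A) x = p at key ⊢
  generalize (A' * A) y = q at key ⊢
  obtain ⟨P, Q, hPQ, hort⟩ := ku_proj B hBclosed
  set s := P (p, q) with hs
  set t := Q (p, q) with ht
  have hst : (s, t) ∈ B.graph := hPQ (p, q)
  have ho : ∀ a b, (a, b) ∈ B.graph → inner ℂ a (p - s) + inner ℂ b (q - t) = 0 :=
    hort (p, q)
  have hadj : (q - t, -(p - s)) ∈ B.adjoint.graph := by
    rw [ku_gadj _ hBdense]
    intro a b hab
    have := ho a b hab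
    rw [inner_neg_right, eq_neg_iff_add_eq_zero, add_comm]
    exact this
  have e1 := key _ _ hadj
  have e2 := ho _ _ hst
  rw [inner_neg_right, eq_neg_iff_add_eq_zero] at e1
  have e3 : inner ℂ (p - s) (p - s) + inner ℂ (q - t) (q - t) = 0 := by
    rw [inner_sub_left p s (p - s), inner_sub_left q t (q - t)]
    linear_combination e1 - e2
  rw [inner_self_eq_norm_sq_to_K, inner_self_eq_norm_sq_to_K] at e3
  have e4 : ‖p - s‖ ^ 2 + ‖q - t‖ ^ 2 = 0 :=
    (RCLike.ofReal_eq_zero (K := ℂ)).1 (by push_cast; exact e3)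
  have e5 : ‖p - s‖ ^ 2 = 0 := by nlinarith [sq_nonneg ‖p - s‖, sq_nonneg ‖q - t‖]
  have e6 : ‖q - t‖ ^ 2 = 0 := by nlinarith [sq_nonneg ‖p - s‖, sq_nonneg ‖q - t‖]
  have e7 : p = s := by simpa [sub_eq_zero] using e5
  have e8 : q = t := by simpa [sub_eq_zero] using e6
  rw [e7, e8]
  exact hst
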